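/- arXiv:1902.06623 — 2 statements merged into one kernel-verified Lean document; each statement's English description precedes it below -/
import Mathlib

section
/- Let Σ be an n×n real symmetric positive definite matrix, μ ∈ ℝⁿ, γ > 0 and θ > 0 with θγ < C, where A = 1ᵀΣ⁻¹μ, C = 1ᵀΣ⁻¹1, B = μᵀΣ⁻¹μ, D = BC − A². Define Γ^{GX}(θ,γ) = (γC + √(γ²C² + 4θγ(C − θγ)D)) / (2(C − θγ)). Then Γ^{GX}(θ,γ) > 0, and the portfolio a*(θ) = (1/Γ^{GX}(θ,γ)) Σ⁻¹μ + (1 − A/Γ^{GX}(θ,γ)) Σ⁻¹1 / C satisfies 1ᵀa*(θ) = 1 and minimises the function a ↦ −(1/(2θ)) ln(1 − θγ aᵀΣa) − ⟨a, μ⟩ over the set {a ∈ ℝⁿ : 1ᵀa = 1, θγ aᵀΣa < 1}. -/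
open Matrix Set

/-!
Write `q a = aᵀΣa`. The number `ΓGX` is the positive root of
`(C - θγ) Γ² - γ C Γ - θγ D = 0`; since `q a* = D / (C Γ²) + 1 / C`, this quadratic equation says
exactly that `1 - θγ q a* = γ / Γ`, so that `a*` is feasible and `Γ` is the effective risk aversion
at `a*`. The first-order condition then reads `Γ Σ a* = μ + c 1` for some scalar `c`.

Global optimality follows by convexity: `log t ≤ t - 1` bounds `L a - L a*` below by
`Γ / 2 (q a - q a*) - ⟨a - a*, μ⟩`, and expanding the quadratic form around `a*`, with the constraint
`1ᵀ(a - a*) = 0`, shows that this lower bound equals `Γ / 2 q (a - a*) ≥ 0`.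
-/

/-- Cauchy–Schwarz for the form `M`; with `M = Σ⁻¹`, `x = μ`, `y = 1` it says `D ≥ 0`. The value of
the form at `C x - A y`, where `C = yᵀMy` and `A = yᵀMx`, is `C` times the stated quantity. -/
lemma merton_discriminant_nonneg {n : ℕ} {M : Matrix (Fin n) (Fin n) ℝ} (hM : M.PosDef)
    (x y : Fin n → ℝ) (hC : 0 < y ⬝ᵥ M *ᵥ y) (hs : x ⬝ᵥ M *ᵥ y = y ⬝ᵥ M *ᵥ x) :
    0 ≤ (x ⬝ᵥ M *ᵥ x) * (y ⬝ᵥ M *ᵥ y) - (y ⬝ᵥ M *ᵥ x) ^ 2 := by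
  have h := hM.posSemidef.dotProduct_mulVec_nonneg
    ((y ⬝ᵥ M *ᵥ y) • x - (y ⬝ᵥ M *ᵥ x) • y)
  simp only [star_trivial, mulVec_sub, mulVec_smul, dotProduct_sub, sub_dotProduct,
    smul_dotProduct, dotProduct_smul, smul_eq_mul, hs] at h
  refine nonneg_of_mul_nonneg_right (a := y ⬝ᵥ M *ᵥ y) ?_ hC
  linarith

lemma dotProduct_mulVec_comm_of_posDef {n : ℕ} {M : Matrix (Fin n) (Fin n) ℝ} (hM : M.PosDef)
    (x y : Fin n → ℝ) : x ⬝ᵥ M *ᵥ y = y ⬝ᵥ M *ᵥ x := by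
  have ht : Mᵀ = M := by simpa [conjTranspose_eq_transpose_of_trivial] using hM.isHermitian.eq
  rw [dotProduct_mulVec, ← mulVec_transpose, ht, dotProduct_comm]

/-- `Γ = (b + √(b² + 4 p e)) / (2 p)` is a positive root of `p Γ² - b Γ - e = 0`. -/
lemma pos_root_of_quadratic {p b e : ℝ} (hp : 0 < p) (hb : 0 < b) (he : 0 ≤ e) :
    0 < (b + √(b ^ 2 + 4 * p * e)) / (2 * p) ∧
      p * ((b + √(b ^ 2 + 4 * p * e)) / (2 * p)) ^ 2
        = b * ((b + √(b ^ 2 + 4 * p * e)) / (2 * p)) + e := by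
  have hsq : √(b ^ 2 + 4 * p * e) ^ 2 = b ^ 2 + 4 * p * e := Real.sq_sqrt (by positivity)
  refine ⟨by positivity, ?_⟩
  generalize √(b ^ 2 + 4 * p * e) = r at hsq
  field_simp
  linear_combination hsq

/-- Tangent-line bound for `t ↦ -(1/(2θ)) log t` at the point `γ / Γ`. -/
lemma neg_log_tangent_bound {θ γ Γ t : ℝ} (hθ : 0 < θ) (hγ : 0 < γ) (hΓ : 0 < Γ) (ht : 0 < t) :
    -(1 / (2 * θ)) * Real.log (γ / Γ) ≤
      -(1 / (2 * θ)) * Real.log t + Γ / (2 * θ * γ) * (t - γ / Γ) := by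
  have hs : 0 < γ / Γ := by positivity
  have h := Real.log_le_sub_one_of_pos (div_pos ht hs)
  rw [Real.log_div ht.ne' hs.ne'] at h
  have h2 := mul_le_mul_of_nonneg_left h (by positivity : 0 ≤ 1 / (2 * θ))
  have h3 : 1 / (2 * θ) * (t / (γ / Γ) - 1) = Γ / (2 * θ * γ) * (t - γ / Γ) := by
    field_simp
  linarith

/-- With Merton constants `A, B, C, D` of `(Σ, μ)`, `γ > 0`, `θ > 0`
with `θγ < C`, and `Γ^{GX}(θ,γ) = (γC + √(γ²C² + 4θγ(C − θγ)D))/(2(C − θγ))`, one has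
`Γ^{GX}(θ,γ) > 0`, and the portfolio
`a*(θ) = (1/Γ^{GX}) Σ⁻¹μ + (1 − A/Γ^{GX}) Σ⁻¹1/C` has weights summing to one and
minimises `a ↦ −(1/(2θ)) ln(1 − θγ aᵀΣa) − ⟨a,μ⟩` over `{a : 1ᵀa = 1, θγ aᵀΣa < 1}`. -/
theorem worstCase_fixedMean_optimal_portfolio {n : ℕ} (hn : 1 ≤ n)
    (Sig : Matrix (Fin n) (Fin n) ℝ) (hSig : Sig.PosDef) (μ : Fin n → ℝ)
    (γ θ : ℝ) (hγ : 0 < γ) (hθ : 0 < θ)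
    (A B C D : ℝ)
    (hA : A = (1 : Fin n → ℝ) ⬝ᵥ Sig⁻¹ *ᵥ μ)
    (hB : B = μ ⬝ᵥ Sig⁻¹ *ᵥ μ)
    (hC : C = (1 : Fin n → ℝ) ⬝ᵥ Sig⁻¹ *ᵥ (1 : Fin n → ℝ))
    (hD : D = B * C - A ^ 2) (hθC : θ * γ < C)
    (ΓGX : ℝ)
    (hΓGX : ΓGX = (γ * C + Real.sqrt (γ ^ 2 * C ^ 2 + 4 * θ * γ * (C - θ * γ) * D))
        / (2 * (C - θ * γ)))
    (astar : Fin n → ℝ)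
    (hastar : astar = (1 / ΓGX) • (Sig⁻¹ *ᵥ μ)
        + (1 - A / ΓGX) • ((1 / C) • (Sig⁻¹ *ᵥ (1 : Fin n → ℝ))))
    (L : (Fin n → ℝ) → ℝ)
    (hL : ∀ a, L a = -(1 / (2 * θ)) * Real.log (1 - θ * γ * (a ⬝ᵥ Sig *ᵥ a)) - a ⬝ᵥ μ) :
    0 < ΓGX ∧ (1 : Fin n → ℝ) ⬝ᵥ astar = 1 ∧
    ∀ a : Fin n → ℝ, (1 : Fin n → ℝ) ⬝ᵥ a = 1 → θ * γ * (a ⬝ᵥ Sig *ᵥ a) < 1 →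
      L astar ≤ L a := by
  have hk : 0 < θ * γ := mul_pos hθ hγ
  have hC0 : 0 < C := hk.trans hθC
  have hunit : IsUnit Sig.det := hSig.det_pos.ne'.isUnit
  have hinv := hSig.inv
  have hsymm := dotProduct_mulVec_comm_of_posDef hSig
  have hμ1 : μ ⬝ᵥ Sig⁻¹ *ᵥ 1 = A := by
    rw [hA]; exact dotProduct_mulVec_comm_of_posDef hinv _ _
  have hD0 : 0 ≤ D := by
    rw [hD, hA, hB, hC]
    exact merton_discriminant_nonneg hinv μ 1 (hC ▸ hC0)
      (dotProduct_mulVec_comm_of_posDef hinv _ _)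
  have hroot := pos_root_of_quadratic (p := C - θ * γ) (b := γ * C) (e := θ * γ * D)
    (sub_pos.2 hθC) (by positivity) (by positivity)
  have hΓeq : (γ * C + √((γ * C) ^ 2 + 4 * (C - θ * γ) * (θ * γ * D))) / (2 * (C - θ * γ))
      = ΓGX := by
    have hdisc : (γ * C) ^ 2 + 4 * (C - θ * γ) * (θ * γ * D)
        = γ ^ 2 * C ^ 2 + 4 * θ * γ * (C - θ * γ) * D := by ring
    rw [hΓGX, hdisc]
  rw [hΓeq] at hroot
  obtain ⟨hΓ, hquad⟩ := hroot
  have hsum : (1 : Fin n → ℝ) ⬝ᵥ astar = 1 := by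
    simp only [hastar, dotProduct_add, dotProduct_smul, smul_eq_mul, ← hA, ← hC]
    field_simp
    ring
  have hfoc : Sig *ᵥ astar = (1 / ΓGX) • μ + ((1 - A / ΓGX) * (1 / C)) • (1 : Fin n → ℝ) := by
    simp only [hastar, mulVec_add, mulVec_smul, mulVec_mulVec, mul_nonsing_inv _ hunit,
      one_mulVec, smul_smul]
  have hmean : astar ⬝ᵥ μ = 1 / ΓGX * B + (1 - A / ΓGX) * (1 / C * A) := by
    rw [dotProduct_comm]
    simp only [hastar, dotProduct_add, dotProduct_smul, smul_eq_mul, ← hB, hμ1]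
  have hdot : ∀ a : Fin n → ℝ, 1 ⬝ᵥ a = 1 →
      a ⬝ᵥ Sig *ᵥ astar = 1 / ΓGX * (a ⬝ᵥ μ) + (1 - A / ΓGX) * (1 / C) := by
    intro a ha
    rw [hfoc, dotProduct_add, dotProduct_smul, dotProduct_smul, dotProduct_comm a 1, ha]
    simp
  -- The quadratic equation for `ΓGX` in the form that identifies the slack at `astar`.
  have hslack : 1 - θ * γ * (astar ⬝ᵥ Sig *ᵥ astar) = γ / ΓGX := by
    rw [hdot astar hsum, hmean]
    field_simp
    rw [hD] at hquad
    linear_combination hquad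
  refine ⟨hΓ, hsum, fun a ha hfeas => ?_⟩
  have htan := neg_log_tangent_bound hθ hγ hΓ (sub_pos.2 hfeas)
  have hq := hSig.posSemidef.dotProduct_mulVec_nonneg (a - astar)
  simp only [star_trivial, mulVec_sub, dotProduct_sub, sub_dotProduct,
    hsymm astar a] at hq
  have hlin : ΓGX * (a ⬝ᵥ Sig *ᵥ astar - astar ⬝ᵥ Sig *ᵥ astar) = a ⬝ᵥ μ - astar ⬝ᵥ μ := by
    rw [hdot a ha, hdot astar hsum]
    field_simp
    ring
  have hcoef : ΓGX / (2 * θ * γ) * (1 - θ * γ * (a ⬝ᵥ Sig *ᵥ a) - γ / ΓGX)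
      = ΓGX / 2 * (astar ⬝ᵥ Sig *ᵥ astar - a ⬝ᵥ Sig *ᵥ a) := by
    rw [← hslack]
    field_simp
    ring
  have hq' := mul_nonneg (half_pos hΓ).le hq
  rw [hL, hL, hslack]
  rw [hcoef] at htan
  linarith
end

section
/- Let a ∈ ℝⁿ, γ > 0 and θ > 0 with θγ aᵀΣa < 1, set S = aᵀΣa and Σ̃ = (Σ⁻¹ − θγ a aᵀ)⁻¹. Then the Kullback–Leibler divergence of the multivariate Gaussian N(μ, Σ̃) from N(μ, Σ) equals (θγ S) / (2(1 − θγ S)) + (1/2) ln(1 − θγ S), i.e. (θ/2) · S · Γ^{GX}(S; θ, γ) + (1/2) ln(1 − θγ S) with Γ^{GX}(S; θ, γ) = γ/(1 − θγ S). -/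
/-!
With `c = θγ` and `z = x - μ`, the precision matrix of the alternative model is
`K = Sig⁻¹ - c a aᵀ`, so the quadratic forms in the two exponents differ by `c (a·z)²` and the
log-likelihood ratio is `(c/2) (a·z)² + (1/2) log (det Sig · det K)`. Hence the divergence is the
mean of this quantity under `N(μ, K⁻¹)`, which is `(c/2) aᵀK⁻¹a + (1/2) log (det Sig · det K)`.

* `integral_precision` computes that mean: writing `K = Bᵀ B` and substituting `y = B z` reduces it
  to the standard Gaussian (`integral_std`), where the second moments of the coordinates come from
  Fubini and the one-dimensional moments.
* `posDef_rankOne` is positivity of `K` (Cauchy–Schwarz for the `Sig⁻¹`-form and `cS < 1`);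
  `det_rankOne` gives `det Sig · det K = 1 - cS`; `dotProduct_inv_rankOne` gives
  `aᵀK⁻¹a = S / (1 - cS)`, since `K Sig a = (1 - cS) a`.
-/

open Matrix MeasureTheory

/-- The density of the multivariate Gaussian `N(μ, Sig)` on `ℝⁿ`. -/
noncomputable def gaussianPdf {n : ℕ} (μ : Fin n → ℝ) (Sig : Matrix (Fin n) (Fin n) ℝ)
    (x : Fin n → ℝ) : ℝ :=
  Real.exp (-(1 / 2) * ((x - μ) ⬝ᵥ Sig⁻¹ *ᵥ (x - μ))) /
    Real.sqrt ((2 * Real.pi) ^ n * Sig.det)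

/-- The multivariate Gaussian probability measure `N(μ, Sig)` on `ℝⁿ`. -/
noncomputable def gaussianMeasure {n : ℕ} (μ : Fin n → ℝ) (Sig : Matrix (Fin n) (Fin n) ℝ) :
    Measure (Fin n → ℝ) :=
  volume.withDensity fun x => ENNReal.ofReal (gaussianPdf μ Sig x)

/-- The Kullback–Leibler divergence of `N(μt, Sigt)` from `N(μ, Sig)`, written as
`∫ m ln m dN(μ,Sig)` with `m` the density ratio. -/
noncomputable def klGaussian {n : ℕ} (μt : Fin n → ℝ) (Sigt : Matrix (Fin n) (Fin n) ℝ)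
    (μ : Fin n → ℝ) (Sig : Matrix (Fin n) (Fin n) ℝ) : ℝ :=
  ∫ x, (gaussianPdf μt Sigt x / gaussianPdf μ Sig x) *
    Real.log (gaussianPdf μt Sigt x / gaussianPdf μ Sig x) ∂(gaussianMeasure μ Sig)

/-! ### Moments of the standard Gaussian -/

lemma integrable_pow_mul_exp (e : ℕ) :
    Integrable fun t : ℝ => t ^ e * Real.exp (-(1 / 2) * t ^ 2) := by
  have h := integrable_rpow_mul_exp_neg_mul_sq (b := 1 / 2) (by norm_num) (s := (e : ℝ))
    (by have := e.cast_nonneg (α := ℝ); linarith)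
  simpa only [Real.rpow_natCast] using h

lemma integral_pow_mul_exp_eq_gaussian (e : ℕ) :
    ∫ t : ℝ, t ^ e * Real.exp (-(1 / 2) * t ^ 2)
      = √(2 * Real.pi) * ∫ t, t ^ e ∂(ProbabilityTheory.gaussianReal 0 1) := by
  have hpos : (0 : ℝ) < √(2 * Real.pi) := by positivity
  rw [ProbabilityTheory.integral_gaussianReal_eq_integral_smul one_ne_zero, ← integral_const_mul]
  refine integral_congr_ae (.of_forall fun t => ?_)
  simp only [ProbabilityTheory.gaussianPDFReal, smul_eq_mul, sub_zero, NNReal.coe_one, mul_one]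
  rw [← mul_assoc, ← mul_assoc, mul_inv_cancel₀ hpos.ne', one_mul, mul_comm]
  congr 2
  ring

lemma integral_exp_std : ∫ t : ℝ, t ^ 0 * Real.exp (-(1 / 2) * t ^ 2) = √(2 * Real.pi) := by
  rw [integral_pow_mul_exp_eq_gaussian]; simp

lemma integral_id_mul_exp_std : ∫ t : ℝ, t ^ 1 * Real.exp (-(1 / 2) * t ^ 2) = 0 := by
  rw [integral_pow_mul_exp_eq_gaussian]; simp

lemma integral_sq_mul_exp_std :
    ∫ t : ℝ, t ^ 2 * Real.exp (-(1 / 2) * t ^ 2) = √(2 * Real.pi) := by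
  rw [integral_pow_mul_exp_eq_gaussian]
  have h := ProbabilityTheory.variance_id_gaussianReal (μ := 0) (v := 1)
  rw [ProbabilityTheory.variance_eq_integral aemeasurable_id] at h
  simp only [id, ProbabilityTheory.integral_id_gaussianReal, sub_zero, NNReal.coe_one] at h
  rw [h, mul_one]

/-- The exponent of `y k` in the monomial `y i * y j`. -/
def pairExp {n : ℕ} (i j k : Fin n) : ℕ := (if k = i then 1 else 0) + if k = j then 1 else 0

lemma mul_eq_prod_pairExp {n : ℕ} (i j : Fin n) (y : Fin n → ℝ) :
    y i * y j = ∏ k, y k ^ pairExp i j k := by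
  simp only [pairExp, pow_add, Finset.prod_mul_distrib, pow_ite, pow_one, pow_zero,
    Finset.prod_ite_eq', Finset.mem_univ, if_true]

lemma exp_dotProduct_self {n : ℕ} (y : Fin n → ℝ) :
    Real.exp (-(1 / 2) * (y ⬝ᵥ y)) = ∏ k, Real.exp (-(1 / 2) * y k ^ 2) := by
  rw [← Real.exp_sum, dotProduct, Finset.mul_sum]
  simp only [sq]

lemma integral_monomial_std {n : ℕ} (i j : Fin n) :
    ∫ y : Fin n → ℝ, ∏ k, (y k ^ pairExp i j k * Real.exp (-(1 / 2) * y k ^ 2))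
      = if i = j then √(2 * Real.pi) ^ n else 0 := by
  rw [integral_fintype_prod_volume_eq_prod
    (fun k (t : ℝ) => t ^ pairExp i j k * Real.exp (-(1 / 2) * t ^ 2))]
  split_ifs with hij
  · subst hij
    rw [Finset.prod_congr rfl (g := fun _ => √(2 * Real.pi)) fun k _ => ?_]
    · simp
    · by_cases hk : k = i
      · simpa [pairExp, hk] using integral_sq_mul_exp_std
      · simpa [pairExp, hk] using integral_exp_std
  · refine Finset.prod_eq_zero (Finset.mem_univ i) ?_
    simpa [pairExp, hij] using integral_id_mul_exp_std

/-- Unnormalised zeroth and second moments of the standard Gaussian on `ℝⁿ`, combined into a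
single integral. -/
lemma integral_std {n : ℕ} (w : Fin n → ℝ) (α β : ℝ) :
    ∫ y : Fin n → ℝ, (α * (w ⬝ᵥ y) ^ 2 + β) * Real.exp (-(1 / 2) * (y ⬝ᵥ y))
      = √(2 * Real.pi) ^ n * (α * (w ⬝ᵥ w) + β) := by
  have hint (e : Fin n → ℕ) : Integrable fun y : Fin n → ℝ =>
      ∏ k, (y k ^ e k * Real.exp (-(1 / 2) * y k ^ 2)) :=
    Integrable.fintype_prod_dep (f := fun k (t : ℝ) => t ^ e k * Real.exp (-(1 / 2) * t ^ 2))
      fun k => integrable_pow_mul_exp (e k)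
  have hexpand : ∀ y : Fin n → ℝ,
      (α * (w ⬝ᵥ y) ^ 2 + β) * Real.exp (-(1 / 2) * (y ⬝ᵥ y))
        = (∑ i, ∑ j, (α * w i * w j) *
            ∏ k, (y k ^ pairExp i j k * Real.exp (-(1 / 2) * y k ^ 2)))
          + β * ∏ k, (y k ^ 0 * Real.exp (-(1 / 2) * y k ^ 2)) := by
    intro y
    simp only [Finset.prod_mul_distrib, ← mul_eq_prod_pairExp, ← exp_dotProduct_self, pow_zero,
      one_mul]
    rw [add_mul, dotProduct, sq, Finset.sum_mul_sum, Finset.mul_sum, Finset.sum_mul]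
    congr 1
    refine Finset.sum_congr rfl fun i _ => ?_
    rw [Finset.mul_sum, Finset.sum_mul]
    exact Finset.sum_congr rfl fun j _ => by ring
  simp_rw [hexpand]
  have hzero : ∫ y : Fin n → ℝ, ∏ k, (y k ^ 0 * Real.exp (-(1 / 2) * y k ^ 2))
      = √(2 * Real.pi) ^ n := by
    rw [integral_fintype_prod_volume_eq_prod
      (fun _ (t : ℝ) => t ^ 0 * Real.exp (-(1 / 2) * t ^ 2)), integral_exp_std]
    simp
  have hterm (i j : Fin n) : Integrable fun y : Fin n → ℝ => (α * w i * w j) *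
      ∏ k, (y k ^ pairExp i j k * Real.exp (-(1 / 2) * y k ^ 2)) :=
    (hint _).const_mul _
  rw [integral_add (integrable_finsetSum _ fun i _ => integrable_finsetSum _ fun j _ => hterm i j)
    ((hint fun _ => 0).const_mul β), integral_const_mul, hzero,
    integral_finsetSum _ fun i _ => integrable_finsetSum _ fun j _ => hterm i j]
  have hinner (i : Fin n) : ∫ y : Fin n → ℝ, ∑ j, (α * w i * w j) *
      ∏ k, (y k ^ pairExp i j k * Real.exp (-(1 / 2) * y k ^ 2))
        = α * w i * w i * √(2 * Real.pi) ^ n := by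
    rw [integral_finsetSum _ fun j _ => hterm i j]
    simp_rw [integral_const_mul, integral_monomial_std]
    simp
  simp_rw [hinner]
  rw [dotProduct, mul_add, Finset.mul_sum, Finset.mul_sum, mul_comm β]
  congr 1
  exact Finset.sum_congr rfl fun i _ => by ring

/-! ### Change of variables -/

open scoped MatrixOrder in
lemma exists_factor {n : ℕ} {K : Matrix (Fin n) (Fin n) ℝ} (hK : K.PosDef) :
    ∃ B : Matrix (Fin n) (Fin n) ℝ, K = Bᵀ * B ∧ B.det ≠ 0 := by
  refine ⟨CFC.sqrt K, ?_, ?_⟩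
  · have h := (CFC.sqrt_nonneg K).posSemidef.isHermitian
    rw [← conjTranspose_eq_transpose_of_trivial, h.eq,
      CFC.sqrt_mul_sqrt_self K hK.posSemidef.nonneg]
  · intro h0
    have h := congrArg Matrix.det (CFC.sqrt_mul_sqrt_self K hK.posSemidef.nonneg)
    rw [det_mul, h0, zero_mul] at h
    exact hK.det_pos.ne h

/-- Moments of the centred Gaussian with precision matrix `K`, by the substitution `y = B x` for a
factorisation `K = Bᵀ B`. -/
lemma integral_precision {n : ℕ} {K : Matrix (Fin n) (Fin n) ℝ} (hK : K.PosDef)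
    (v : Fin n → ℝ) (α β : ℝ) :
    ∫ x : Fin n → ℝ, (α * (v ⬝ᵥ x) ^ 2 + β) * Real.exp (-(1 / 2) * (x ⬝ᵥ K *ᵥ x))
      = √((2 * Real.pi) ^ n * K⁻¹.det) * (α * (v ⬝ᵥ K⁻¹ *ᵥ v) + β) := by
  obtain ⟨B, rfl, hB⟩ := exists_factor hK
  have hBu : IsUnit B.det := isUnit_iff_ne_zero.2 hB
  set w : Fin n → ℝ := v ᵥ* B⁻¹ with hw
  have hwB (x : Fin n → ℝ) : w ⬝ᵥ (B *ᵥ x) = v ⬝ᵥ x := by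
    rw [hw, ← dotProduct_mulVec, mulVec_mulVec, nonsing_inv_mul _ hBu, one_mulVec]
  have hww : w ⬝ᵥ w = v ⬝ᵥ (Bᵀ * B)⁻¹ *ᵥ v := by
    rw [Matrix.mul_inv_rev, ← mulVec_mulVec, dotProduct_mulVec v, ← transpose_nonsing_inv,
      mulVec_transpose]
  have hq (x : Fin n → ℝ) : x ⬝ᵥ (Bᵀ * B) *ᵥ x = (B *ᵥ x) ⬝ᵥ (B *ᵥ x) := by
    rw [← mulVec_mulVec, dotProduct_mulVec, vecMul_transpose]
  have hinj : Function.Injective (toLin' B) := by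
    intro x y hxy
    have := congrArg (fun z => B⁻¹ *ᵥ z) hxy
    simpa [mulVec_mulVec, nonsing_inv_mul _ hBu] using this
  have hemb : MeasurableEmbedding (toLin' B) :=
    (LinearMap.isClosedEmbedding_of_injective (LinearMap.ker_eq_bot.2 hinj)).measurableEmbedding
  have hmap := hemb.integral_map (μ := volume)
    (fun y : Fin n → ℝ => (α * (w ⬝ᵥ y) ^ 2 + β) * Real.exp (-(1 / 2) * (y ⬝ᵥ y)))
  rw [Real.map_matrix_volume_pi_eq_smul_volume_pi hB, integral_smul_measure, integral_std] at hmap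
  simp only [toLin'_apply, hwB] at hmap
  simp only [hq]
  rw [← hmap, hww, ENNReal.toReal_ofReal (abs_nonneg _), smul_eq_mul, ← mul_assoc]
  congr 1
  rw [det_nonsing_inv, det_mul, det_transpose, Ring.inverse_eq_inv', mul_inv, ← sq,
    Real.sqrt_mul (y := (B.det⁻¹) ^ 2) (x := (2 * Real.pi) ^ n) (by positivity),
    Real.sqrt_sq_eq_abs, mul_comm]
  congr 1
  symm
  rw [Real.sqrt_eq_iff_mul_self_eq (by positivity) (by positivity), ← mul_pow,
    Real.mul_self_sqrt (by positivity)]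

/-! ### Rank-one perturbation of the precision matrix -/

section RankOne

variable {n : ℕ} {Sig : Matrix (Fin n) (Fin n) ℝ} {a : Fin n → ℝ} {c : ℝ}

lemma quad_rankOne (x : Fin n → ℝ) :
    x ⬝ᵥ (Sig⁻¹ - c • vecMulVec a a) *ᵥ x = x ⬝ᵥ Sig⁻¹ *ᵥ x - c * (a ⬝ᵥ x) ^ 2 := by
  rw [sub_mulVec, smul_mulVec, vecMulVec_mulVec, dotProduct_sub, dotProduct_smul]
  simp only [op_smul_eq_smul, dotProduct_smul, smul_eq_mul]
  rw [dotProduct_comm x a]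
  ring

/-- When `a·x ≠ 0`, positivity at `x` follows from nonnegativity of the `Sig⁻¹`-form at
`x - c (a·x) Sig a`; when `a·x = 0`, the perturbation vanishes at `x`. -/
lemma posDef_rankOne (hSig : Sig.PosDef) (hc : 0 < c) (hcS : c * (a ⬝ᵥ Sig *ᵥ a) < 1) :
    (Sig⁻¹ - c • vecMulVec a a).PosDef := by
  have hu : IsUnit Sig.det := isUnit_iff_ne_zero.2 hSig.det_pos.ne'
  have hsymm : Sig⁻¹ᵀ = Sig⁻¹ := by
    rw [← conjTranspose_eq_transpose_of_trivial]; exact hSig.inv.isHermitian.eq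
  refine PosDef.of_dotProduct_mulVec_pos ?_ fun x hx => ?_
  · refine hSig.inv.isHermitian.sub ?_
    ext i j
    simp [vecMulVec, mul_comm]
  rw [star_trivial, quad_rankOne]
  set t := a ⬝ᵥ x with ht
  set S := a ⬝ᵥ Sig *ᵥ a with hS
  by_cases ht0 : t = 0
  · have := hSig.inv.dotProduct_mulVec_pos hx
    rw [star_trivial] at this
    simpa [ht0] using this
  have h := hSig.inv.posSemidef.dotProduct_mulVec_nonneg (x - (c * t) • Sig *ᵥ a)
  have h1 : Sig⁻¹ *ᵥ (Sig *ᵥ a) = a := by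
    rw [mulVec_mulVec, nonsing_inv_mul _ hu, one_mulVec]
  have h2 : (Sig *ᵥ a) ⬝ᵥ Sig⁻¹ *ᵥ x = t := by
    rw [dotProduct_mulVec, ← mulVec_transpose, hsymm, h1]
  have h3 : (Sig *ᵥ a) ⬝ᵥ a = S := dotProduct_comm _ _
  have h4 : x ⬝ᵥ a = t := dotProduct_comm _ _
  simp only [star_trivial, mulVec_sub, mulVec_smul, h1, sub_dotProduct, dotProduct_sub,
    smul_dotProduct, dotProduct_smul, smul_eq_mul, h2, h3, h4] at h
  have ht2 : 0 < t ^ 2 := by positivity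
  have h5 : 0 < c * t ^ 2 * (1 - c * S) := mul_pos (mul_pos hc ht2) (by linarith)
  nlinarith

/-- The Sherman–Morrison formula paired with `a`, read off from `K (Sig a) = (1 - cS) a` for the
perturbed matrix `K` and `S = aᵀ Sig a`. -/
lemma dotProduct_inv_rankOne (hSig : Sig.PosDef) (hc : 0 < c)
    (hcS : c * (a ⬝ᵥ Sig *ᵥ a) < 1) :
    a ⬝ᵥ (Sig⁻¹ - c • vecMulVec a a)⁻¹ *ᵥ a
      = (a ⬝ᵥ Sig *ᵥ a) / (1 - c * (a ⬝ᵥ Sig *ᵥ a)) := by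
  have hu : IsUnit Sig.det := isUnit_iff_ne_zero.2 hSig.det_pos.ne'
  have hKu := isUnit_iff_ne_zero.2 (posDef_rankOne hSig hc hcS).det_pos.ne'
  set K := Sig⁻¹ - c • vecMulVec a a with hK
  set S := a ⬝ᵥ Sig *ᵥ a with hS
  have h : K *ᵥ (Sig *ᵥ a) = (1 - c * S) • a := by
    rw [hK, sub_mulVec, smul_mulVec, vecMulVec_mulVec, mulVec_mulVec, nonsing_inv_mul _ hu,
      one_mulVec, op_smul_eq_smul, smul_smul, sub_smul, one_smul]
  have h' : Sig *ᵥ a = (1 - c * S) • (K⁻¹ *ᵥ a) := by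
    rw [← mulVec_smul, ← h, mulVec_mulVec, nonsing_inv_mul _ hKu, one_mulVec]
  have h'' : S = (1 - c * S) * (a ⬝ᵥ K⁻¹ *ᵥ a) := by
    rw [← smul_eq_mul, ← dotProduct_smul, ← h']
  rw [eq_div_iff (by linarith : (1 : ℝ) - c * S ≠ 0), mul_comm, ← h'']

lemma det_rankOne (hSig : Sig.PosDef) :
    (Sig⁻¹ - c • vecMulVec a a).det = Sig.det⁻¹ * (1 - c * (a ⬝ᵥ Sig *ᵥ a)) := by
  have hu : IsUnit Sig.det := isUnit_iff_ne_zero.2 hSig.det_pos.ne'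
  have h : Sig⁻¹ - c • vecMulVec a a
      = Sig⁻¹ * (1 + replicateCol Unit (-c • (Sig *ᵥ a)) * replicateRow Unit a) := by
    rw [← vecMulVec_eq, mul_add, mul_one, mul_vecMulVec, mulVec_smul, mulVec_mulVec,
      nonsing_inv_mul _ hu, one_mulVec, neg_smul, neg_vecMulVec, smul_vecMulVec, sub_eq_add_neg]
  rw [h, det_mul, det_one_add_replicateCol_mul_replicateRow, det_nonsing_inv,
    Ring.inverse_eq_inv', dotProduct_smul, smul_eq_mul]
  ring

end RankOne

/-! ### Reduction of the divergence to a Lebesgue integral -/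

lemma gaussianPdf_pos {n : ℕ} (μ : Fin n → ℝ) {Sig : Matrix (Fin n) (Fin n) ℝ}
    (hSig : Sig.PosDef) (x : Fin n → ℝ) : 0 < gaussianPdf μ Sig x := by
  have := hSig.det_pos
  unfold gaussianPdf
  positivity

lemma klGaussian_eq_integral_volume {n : ℕ} (μt μ : Fin n → ℝ)
    (Sigt Sig : Matrix (Fin n) (Fin n) ℝ) (hSig : Sig.PosDef) :
    klGaussian μt Sigt μ Sig = ∫ x, gaussianPdf μt Sigt x *
      Real.log (gaussianPdf μt Sigt x / gaussianPdf μ Sig x) := by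
  have hmeas : Measurable fun x => ENNReal.ofReal (gaussianPdf μ Sig x) := by
    refine ENNReal.measurable_ofReal.comp (Continuous.measurable ?_)
    unfold gaussianPdf
    fun_prop
  rw [klGaussian, gaussianMeasure, integral_withDensity_eq_integral_toReal_smul hmeas
    (.of_forall fun _ => ENNReal.ofReal_lt_top)]
  refine integral_congr_ae (.of_forall fun x => ?_)
  have hp := gaussianPdf_pos μ hSig x
  simp only [smul_eq_mul, ENNReal.toReal_ofReal hp.le]
  rw [← mul_assoc, mul_div_cancel₀ _ hp.ne']

/-- For `θ > 0` with `θγ aᵀΣa < 1`, `S = aᵀΣa` and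
`Σ̃ = (Σ⁻¹ − θγ a aᵀ)⁻¹`, the KL divergence of `N(μ,Σ̃)` from `N(μ,Σ)` equals
`θγS/(2(1 − θγS)) + (1/2) ln(1 − θγS)`, i.e.
`(θ/2) S Γ^{GX}(S;θ,γ) + (1/2) ln(1 − θγS)` with `Γ^{GX}(S;θ,γ) = γ/(1 − θγS)`. -/
theorem klGaussian_worstCase_fixedMean {n : ℕ} (hn : 1 ≤ n)
    (μ : Fin n → ℝ) (Sig : Matrix (Fin n) (Fin n) ℝ) (hSig : Sig.PosDef)
    (a : Fin n → ℝ) (γ θ : ℝ) (hγ : 0 < γ) (hθ : 0 < θ)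
    (S : ℝ) (hS : S = a ⬝ᵥ Sig *ᵥ a) (hθS : θ * γ * S < 1)
    (Sigt : Matrix (Fin n) (Fin n) ℝ)
    (hSigt : Sigt = (Sig⁻¹ - (θ * γ) • vecMulVec a a)⁻¹) :
    klGaussian μ Sigt μ Sig
      = θ * γ * S / (2 * (1 - θ * γ * S)) + 1 / 2 * Real.log (1 - θ * γ * S) ∧
    klGaussian μ Sigt μ Sig
      = θ / 2 * S * (γ / (1 - θ * γ * S)) + 1 / 2 * Real.log (1 - θ * γ * S) := by
  have hc : 0 < θ * γ := mul_pos hθ hγ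
  set c := θ * γ with hcdef
  have hcS : c * (a ⬝ᵥ Sig *ᵥ a) < 1 := by rwa [← hS]
  have hS1 : 0 < 1 - c * S := by linarith
  have hK := posDef_rankOne hSig hc hcS
  have hSigtPD : Sigt.PosDef := hSigt ▸ hK.inv
  have hinv : Sigt⁻¹ = Sig⁻¹ - c • vecMulVec a a := by
    rw [hSigt, nonsing_inv_nonsing_inv _ (isUnit_iff_ne_zero.2 hK.det_pos.ne')]
  have hd := hSig.det_pos
  have hdt := hSigtPD.det_pos
  have hdet : Sig.det = (1 - c * S) * Sigt.det := by
    rw [hSigt, det_nonsing_inv, det_rankOne hSig, ← hS, Ring.inverse_eq_inv', mul_inv, inv_inv]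
    field_simp
  -- The log-likelihood ratio is quadratic in `a · (x - μ)` alone.
  have hlog (x : Fin n → ℝ) : Real.log (gaussianPdf μ Sigt x / gaussianPdf μ Sig x)
      = c / 2 * (a ⬝ᵥ (x - μ)) ^ 2 + 1 / 2 * Real.log (1 - c * S) := by
    rw [Real.log_div (gaussianPdf_pos μ hSigtPD x).ne' (gaussianPdf_pos μ hSig x).ne']
    unfold gaussianPdf
    rw [Real.log_div (Real.exp_ne_zero _) (by positivity),
      Real.log_div (Real.exp_ne_zero _) (by positivity), Real.log_exp, Real.log_exp,
      Real.log_sqrt (by positivity), Real.log_sqrt (by positivity), hdet,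
      Real.log_mul (by positivity) (by positivity), Real.log_mul (by positivity) (by positivity),
      Real.log_mul hS1.ne' (by positivity), hinv, quad_rankOne]
    ring
  have hkl : klGaussian μ Sigt μ Sig
      = c * S / (2 * (1 - c * S)) + 1 / 2 * Real.log (1 - c * S) := by
    rw [klGaussian_eq_integral_volume _ _ _ _ hSig]
    simp_rw [hlog]
    unfold gaussianPdf
    rw [integral_sub_right_eq_self (fun z : Fin n → ℝ =>
      Real.exp (-(1 / 2) * (z ⬝ᵥ Sigt⁻¹ *ᵥ z)) / √((2 * Real.pi) ^ n * Sigt.det) *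
        (c / 2 * (a ⬝ᵥ z) ^ 2 + 1 / 2 * Real.log (1 - c * S))) μ]
    have hI := integral_precision hSigtPD.inv a (c / 2) (1 / 2 * Real.log (1 - c * S))
    rw [nonsing_inv_nonsing_inv _ (isUnit_iff_ne_zero.2 hdt.ne')] at hI
    have hquad : a ⬝ᵥ Sigt *ᵥ a = S / (1 - c * S) := by
      rw [hSigt, dotProduct_inv_rankOne hSig hc hcS, ← hS]
    have hD : 0 < √((2 * Real.pi) ^ n * Sigt.det) := by positivity
    calc _ = (√((2 * Real.pi) ^ n * Sigt.det))⁻¹ * ∫ z : Fin n → ℝ,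
          (c / 2 * (a ⬝ᵥ z) ^ 2 + 1 / 2 * Real.log (1 - c * S)) *
            Real.exp (-(1 / 2) * (z ⬝ᵥ Sigt⁻¹ *ᵥ z)) := by
          rw [← integral_const_mul]
          exact integral_congr_ae (.of_forall fun z => by ring)
      _ = _ := by
          rw [hI, inv_mul_cancel_left₀ hD.ne', hquad]
          field_simp
  refine ⟨hkl, ?_⟩
  rw [hkl]
  congr 1
  rw [hcdef] at hS1 ⊢
  field_simp
end
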